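/- Let P be a finite (3+1)-free poset with |P| = n, and r a positive integer. Writing X_{inc(P)}(x) = Σ_{λ ⊢ n} c^P_λ e_λ(x), the partial sum Σ_{λ ⊢ n, λ_1 ≤ r} c^P_λ equals the number of standard cylindric P-tableaux of shape (r^c t)/∅/1, where (r^c t) is the partition of n with the maximal number of rows of length r (so n = rc + t with 0 ≤ t < r, adjusting conventions). In particular this partial sum is nonnegative. -/

import Mathlib

open MvPolynomial
open scoped Classical

noncomputable section

/-- A poset is `(3+1)`-free: no induced subposet consisting of a 3-chain
together with an element incomparable to all of it. -/
def ThreePlusOneFree (P : Type*) [PartialOrder P] : Prop :=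
  ¬ ∃ a b c x : P, a < b ∧ b < c ∧
    ¬(x ≤ a ∨ a ≤ x) ∧ ¬(x ≤ b ∨ b ≤ x) ∧ ¬(x ≤ c ∨ c ≤ x)

/-- The `P`-elementary function `e_k^P(u)`, the sum of `u_{i_1} ⋯ u_{i_k}`
over strict chains `i_1 <_P ⋯ <_P i_k`. -/
def eP (P : Type*) [Fintype P] [PartialOrder P] (k : ℕ) : MvPolynomial P ℤ :=
  ∑ f ∈ Finset.univ.filter (fun f : Fin k → P => ∀ a b : Fin k, a < b → f a < f b),
    ∏ i, X (f i)

/-- `e_k^P` for an integer index, vanishing for negative `k`. -/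
def ePz (P : Type*) [Fintype P] [PartialOrder P] (k : ℤ) : MvPolynomial P ℤ :=
  if 0 ≤ k then eP P k.toNat else 0

/-- Conjugate partition: `conj f c` is the length of column `c` (0-indexed)
of the diagram of `f`. -/
def conj (f : ℕ → ℕ) (c : ℕ) : ℕ := Set.ncard {i | c < f i}

/-- `f : ℕ → ℕ` (0-indexed list of parts) is a partition. -/
def IsPartition (f : ℕ → ℕ) : Prop := (∀ i, f (i + 1) ≤ f i) ∧ ∃ N, ∀ i, N ≤ i → f i = 0

/-- `λ/μ/d` is a cylindric shape. -/
def IsCylShape (lam mu : ℕ → ℕ) (d : ℕ) : Prop :=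
  IsPartition lam ∧ IsPartition mu ∧ (∀ i, mu i ≤ lam i) ∧ 0 < lam 0 ∧
    conj lam 0 ≤ conj lam (lam 0 - 1) + d ∧
    conj mu 0 ≤ conj mu (lam 0 - 1) + d ∧ d ≤ conj lam 0

section Arrays
variable {P : Type*} [PartialOrder P]

/-- Column-strictness of the array `A` (a total function; only values on the cells
of the shape `col(α,β)`, over `l` columns, matter): entries strictly increase
down each column. This is the defining condition for a `P`-array. -/
def ColStrict (A : ℕ → ℕ → P) (l : ℕ) (α β : ℕ → ℕ) : Prop :=
  ∀ c r r', c < l → β c ≤ r → r < r' → r' < α c → A r c < A r' c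

/-- `col(α,β)` (with `β` a partition) is a skew partition shape. -/
def IsSkewShape (l : ℕ) (α β : ℕ → ℕ) : Prop :=
  (∀ c, c + 1 < l → α (c + 1) ≤ α c ∧ β (c + 1) ≤ β c) ∧ ∀ c, c < l → β c ≤ α c

/-- Rows of `A` are weakly increasing in `P`: no entry is `>_P` its right neighbour. -/
def RowWeak (A : ℕ → ℕ → P) (l : ℕ) (α β : ℕ → ℕ) : Prop :=
  ∀ r c, c + 1 < l → β c ≤ r → r < α c → β (c + 1) ≤ r → r < α (c + 1) →
    ¬ A r (c + 1) < A r c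

/-- `A` is a `P`-tableau of shape `col(α,β)`. -/
def IsPTableau (A : ℕ → ℕ → P) (l : ℕ) (α β : ℕ → ℕ) : Prop :=
  IsSkewShape l α β ∧ ColStrict A l α β ∧ RowWeak A l α β

/-- The glued array `A^d`: columns `0,…,l-1` of `A` shifted down by `d`, and a copy
of column `0` of `A` as the extra column `l`. -/
def glueArr (A : ℕ → ℕ → P) (l d : ℕ) : ℕ → ℕ → P :=
  fun r c => if c < l then A (r - d) c else A r 0

/-- Column lengths of the glued shape. -/
def glueCol (f : ℕ → ℕ) (l d : ℕ) : ℕ → ℕ :=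
  fun c => if c < l then f c + d else f 0

/-- `(r,j)` is an intersection point of columns `i < j` of `A`
(shape `col(α,β)`), with witness in column `i`. -/
def IsIntPoint (A : ℕ → ℕ → P) (α β : ℕ → ℕ) (i j r : ℕ) : Prop :=
  i < j ∧ β j ≤ r ∧ r < α j ∧
    ∃ w, w + j = r + 1 + i ∧ β i ≤ w ∧ (α i ≤ w ∨ A r j < A w i)

/-- Columns `i < j` of `A` intersect. -/
def Intersecting (A : ℕ → ℕ → P) (α β : ℕ → ℕ) (i j : ℕ) : Prop :=
  ∃ r, IsIntPoint A α β i j r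

/-- `(r,j)` is a `P`-minimal intersection point of the array `A` with columns `0,…,L`. -/
def PMinIP (A : ℕ → ℕ → P) (α β : ℕ → ℕ) (L j r : ℕ) : Prop :=
  j ≤ L ∧ (∃ i, IsIntPoint A α β i j r) ∧
    ∀ j' r' i', j' ≤ L → IsIntPoint A α β i' j' r' → ¬ A r' j' < A r j

/-- `(r,j)` is the rightmost `P`-minimal intersection point. -/
def RightmostPMinIP (A : ℕ → ℕ → P) (α β : ℕ → ℕ) (L j r : ℕ) : Prop :=
  PMinIP A α β L j r ∧ ∀ j' r', PMinIP A α β L j' r' → j' ≤ j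

/-- The cylindric swap `swap(A,i,j,d)` at the `P`-minimal intersection point `m` of
columns `i < j ≤ l` of `A^d` (the minimal intersection point is the lowest-row one,
since column `j` is a chain).  Everything is in the coordinates of `A`; the case
`j = l` is the wrap-around case, where entries move between column `i` and column `0`. -/
def swapArr (A : ℕ → ℕ → P) (l d i j : ℕ) (α β : ℕ → ℕ) : ℕ → ℕ → P :=
  let m := sInf {r | IsIntPoint (glueArr A l d) (glueCol α l d) (glueCol β l d) i j r}
  if j < l then
    fun r c =>
      if c = i ∧ m + 1 + i ≤ r + j + d then A (r + (j - i)) j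
      else if c = j ∧ m + 1 ≤ r + d then A (r - (j - i)) i
      else A r c
  else
    fun r c =>
      if c = i ∧ m + 1 + i ≤ r + j + d then A (r + (j - i) + d) 0
      else if c = 0 ∧ m + 1 ≤ r then A (r - (d + (j - i))) i
      else A r c

end Arrays

/-- A cylindric `P`-tableau of shape `λ/μ/d`, encoded column by column:
`T c p` is the entry of column `c` in the `p`-th cell from the top
(global row `conj μ c + p`).  The condition is that the glued filling `T^d`
is a `P`-tableau: the glued shape is a skew shape, columns strictly increase
in `P`, and rows (including the wrap-around adjacency between the last column
and the copy of column `0` shifted up by `d`) weakly increase in `P`. -/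
def IsCylTab {P : Type*} [PartialOrder P] (lam mu : ℕ → ℕ) (d : ℕ)
    (T : ∀ c : Fin (lam 0), Fin (conj lam c - conj mu c) → P) : Prop :=
  (∀ c, c + 1 < lam 0 → conj lam (c + 1) ≤ conj lam c ∧ conj mu (c + 1) ≤ conj mu c) ∧
  (∀ c, c < lam 0 → conj mu c ≤ conj lam c) ∧
  (0 < lam 0 → conj lam 0 ≤ conj lam (lam 0 - 1) + d ∧ conj mu 0 ≤ conj mu (lam 0 - 1) + d) ∧
  (∀ c p q, p < q → T c p < T c q) ∧
  (∀ (c : Fin (lam 0)) (hc : c.1 + 1 < lam 0)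
      (p : Fin (conj lam c.1 - conj mu c.1)) (q : Fin (conj lam (c.1 + 1) - conj mu (c.1 + 1))),
      conj mu c.1 + p.1 = conj mu (c.1 + 1) + q.1 → ¬ T ⟨c.1 + 1, hc⟩ q < T c p) ∧
  (∀ (h0 : 0 < lam 0) (p : Fin (conj lam (lam 0 - 1) - conj mu (lam 0 - 1)))
      (q : Fin (conj lam 0 - conj mu 0)),
      conj mu (lam 0 - 1) + p.1 + d = conj mu 0 + q.1 →
      ¬ T ⟨0, h0⟩ q < T ⟨lam 0 - 1, Nat.sub_lt h0 Nat.one_pos⟩ p)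

/-- The `u`-monomial weight `u^T` of a tableau. -/
def uT {P : Type*} (lam mu : ℕ → ℕ)
    (T : ∀ c : Fin (lam 0), Fin (conj lam c - conj mu c) → P) : MvPolynomial P ℤ :=
  ∏ c, ∏ p, X (T c p)

/-- Number of occurrences of the value `x` in the tableau `T`. -/
def tabCount {P : Type*} (lam mu : ℕ → ℕ)
    (T : ∀ c : Fin (lam 0), Fin (conj lam c - conj mu c) → P) (x : P) : ℕ :=
  ∑ c, (Finset.univ.filter (fun p => T c p = x)).card

/-- `T` is standard: it contains each element of `P` exactly once. -/
def IsStandardTab {P : Type*} (lam mu : ℕ → ℕ)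
    (T : ∀ c : Fin (lam 0), Fin (conj lam c - conj mu c) → P) : Prop :=
  ∀ x : P, tabCount lam mu T x = 1

/-- The chromatic symmetric polynomial of the incomparability graph `inc(P)`,
in the variables `x_0, …, x_{N-1}`. -/
def chromPoly (P : Type*) [Fintype P] [PartialOrder P] (N : ℕ) : MvPolynomial (Fin N) ℤ :=
  ∑ κ ∈ Finset.univ.filter
      (fun κ : P → Fin N => ∀ a b : P, a ≠ b → ¬(a ≤ b ∨ b ≤ a) → κ a ≠ κ b),
    ∏ v, X (κ v)

end

/-!
View a colouring of the incomparability graph of `P` by `Fin r` as an array whose columns are the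
colour classes, which are chains. At the `(r + 1)`-th roots of unity other than `1`, the elementary
symmetric polynomial `e_k` takes the value `(-1) ^ k` if `k ≤ r` and `0` otherwise, so that
`X_{inc(P)}` takes the value `(-1) ^ n` times the sum of the coefficients of the `e_λ` with
`λ₁ ≤ r`.

Multiply this value by the alternant `det (z_k ^ (-j))`. Since the sum over colourings is symmetric
in the `z_k`, the product is the sum over all colourings of the alternants `det (z_k ^ (a_j - j))`,
where `a_j` is the length of column `j`. As exponents only matter modulo `r + 1`, column `0` also
acts as column `r + 1`, that is, as a right neighbour of column `r - 1` shifted by one cell, so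
crossings of columns make sense around a cylinder. Swapping the tails of two columns at their first
crossing is a sign-reversing involution because `P` is `(3+1)`-free. The colourings without
crossings are the standard cylindric tableaux, and each of them contributes `(-1) ^ n` times the
original alternant.
-/

section CyclicGap

variable {r : ℕ}

/-- The distance, counted along the positive direction of `ℤ / (r + 1)` and lying in
`{1, …, r + 1}`, from `i` to `j`. The slot `r` separates the last column of a cylindric array from
the copy of column `0` that follows it: since this copy is shifted by one cell, going from column
`r - 1` to column `0` counts for `2`. -/
def cyclicGap (j i : Fin r) : ℕ := if i.1 < j.1 then j.1 - i.1 else j.1 + (r + 1) - i.1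

/-- Column `j` is the right neighbour of column `i` around the cylinder. -/
def CyclicAdj (i j : Fin r) : Prop := i.1 + 1 = j.1 ∨ (j.1 = 0 ∧ i.1 + 1 = r)

lemma cyclicGap_pos (j i : Fin r) : 0 < cyclicGap j i := by
  unfold cyclicGap
  split_ifs <;> omega

lemma cyclicGap_eq_one {i j : Fin r} (h : i.1 + 1 = j.1) : cyclicGap j i = 1 := by
  unfold cyclicGap
  split_ifs <;> omega

lemma cyclicGap_eq_two {i j : Fin r} (hj : j.1 = 0) (hi : i.1 + 1 = r) : cyclicGap j i = 2 := by
  unfold cyclicGap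
  split_ifs <;> omega

lemma cyclicGap_injective (j : Fin r) : Function.Injective (cyclicGap j) := by
  intro i k h
  unfold cyclicGap at h
  ext
  split_ifs at h <;> omega

lemma cyclicGap_triangle (l j i : Fin r) : cyclicGap l i ≤ cyclicGap l j + cyclicGap j i := by
  unfold cyclicGap
  split_ifs <;> omega

lemma cyclicGap_eq_add_or {l j : Fin r} (h : l ≠ j) (i : Fin r) :
    cyclicGap l i = cyclicGap l j + cyclicGap j i ∨
      cyclicGap j i = cyclicGap j l + cyclicGap l i := by
  have := Fin.val_ne_of_ne h
  unfold cyclicGap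
  split_ifs <;> omega

lemma cyclicGap_add_mul_modEq (j i : Fin r) :
    cyclicGap j i + r * j ≡ r * i [MOD r + 1] := by
  obtain ⟨t, ht⟩ : ∃ t, cyclicGap j i + i = j + (r + 1) * t := by
    unfold cyclicGap
    split_ifs
    · exact ⟨0, by omega⟩
    · exact ⟨1, by omega⟩
  refine Nat.ModEq.add_right_cancel' i.1 ?_
  have hleft : cyclicGap j i + r * j + i = (r + 1) * (j + t) := by linear_combination ht
  have hright : r * i.1 + i = (r + 1) * i := by ring
  rw [hleft, hright]
  exact (Nat.modEq_zero_iff_dvd.2 (dvd_mul_right _ _)).trans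
    (Nat.modEq_zero_iff_dvd.2 (dvd_mul_right _ _)).symm

lemma exists_cyclicGap_eq_add {i j : Fin r} (hij : i ≠ j) (hadj : ¬ CyclicAdj i j) :
    ∃ l, i ≠ l ∧ l ≠ j ∧ cyclicGap j i = cyclicGap j l + cyclicGap l i := by
  have := Fin.val_ne_of_ne hij
  obtain ⟨hsucc, hwrap⟩ := not_or.1 hadj
  by_cases hlast : i.1 + 1 = r
  · refine ⟨⟨0, by omega⟩, ?_⟩
    simp only [ne_eq, Fin.ext_iff, cyclicGap]
    split_ifs <;> omega
  · refine ⟨⟨i + 1, by omega⟩, ?_⟩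
    simp only [ne_eq, Fin.ext_iff, cyclicGap]
    split_ifs <;> omega

end CyclicGap

section ChainColoring

open Finset

variable {P α : Type*}

lemma ThreePlusOneFree.le_of_not_lt [PartialOrder P] (h31 : ThreePlusOneFree P) {a b c x : P}
    (hab : a < b) (hbc : b < c) (hax : ¬ a < x) (hne : x ≠ a) : x ≤ c := by
  by_contra hxc
  have hxb : ¬ x ≤ b := fun h => hxc (h.trans hbc.le)
  have hxa : ¬ x ≤ a := fun h => hxb (h.trans hab.le)
  have hax' : ¬ a ≤ x := fun h => hax (h.lt_of_ne hne.symm)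
  have hbx : ¬ b ≤ x := fun h => hax' (hab.le.trans h)
  have hcx : ¬ c ≤ x := fun h => hbx (hbc.le.trans h)
  exact h31 ⟨a, b, c, x, hab, hbc, not_or.2 ⟨hxa, hax'⟩, not_or.2 ⟨hxb, hbx⟩, not_or.2 ⟨hxc, hcx⟩⟩

/-- The proper colourings of the incomparability graph: every colour class is a chain. The chain of
colour `i`, read upwards, is thought of as column `i` of an array filled with the elements of `P`,
whose rows are numbered from `1`. -/
def IsChainColoring [PartialOrder P] (κ : P → α) : Prop :=
  ∀ ⦃a b : P⦄, κ a = κ b → a ≤ b ∨ b ≤ a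

lemma isChainColoring_iff_ne [PartialOrder P] {κ : P → α} :
    IsChainColoring κ ↔ ∀ a b : P, a ≠ b → ¬ (a ≤ b ∨ b ≤ a) → κ a ≠ κ b := by
  refine ⟨fun h a b _ hab hκ => hab (h hκ), fun h a b hκ => ?_⟩
  by_contra hab
  exact h a b (fun e => hab (Or.inl e.le)) hab hκ

lemma isChainColoring_comp_iff [PartialOrder P] {β : Type*} {κ : P → α} {f : α → β}
    (hf : Function.Injective f) : IsChainColoring (f ∘ κ) ↔ IsChainColoring κ := by
  simp only [IsChainColoring, Function.comp_apply, hf.eq_iff]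

lemma IsChainColoring.not_lt_iff_le [PartialOrder P] {κ : P → α} (h : IsChainColoring κ) {a b : P}
    (hab : κ a = κ b) : ¬ a < b ↔ b ≤ a :=
  ⟨fun hlt => (h hab).elim (fun hle => (eq_of_le_of_not_lt hle hlt).ge) id, not_lt_of_ge⟩

variable [Fintype P]

/-- The number of elements of colour `i` satisfying `Q`. -/
noncomputable def colCount (κ : P → α) (i : α) (Q : P → Prop) : ℕ := #{z | κ z = i ∧ Q z}

/-- The number of elements of column `i`. -/
noncomputable def colLen (κ : P → α) (i : α) : ℕ := colCount κ i fun _ => True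

lemma colCount_mono (κ : P → α) (i : α) {Q Q' : P → Prop} (h : ∀ z, κ z = i → Q z → Q' z) :
    colCount κ i Q ≤ colCount κ i Q' :=
  card_le_card <| monotone_filter_right _ fun z _ hz => ⟨hz.1, h z hz.1 hz.2⟩

lemma colCount_congr {κ κ' : P → α} {i j : α} {Q Q' : P → Prop}
    (h : ∀ z, κ z = i ∧ Q z ↔ κ' z = j ∧ Q' z) : colCount κ i Q = colCount κ' j Q' :=
  congrArg card <| filter_congr fun z _ => h z

lemma colCount_lt_colCount {κ : P → α} {i : α} {Q Q' : P → Prop} (h : ∀ z, κ z = i → Q z → Q' z)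
    {z : P} (hz : κ z = i) (hQ : ¬ Q z) (hQ' : Q' z) : colCount κ i Q < colCount κ i Q' := by
  refine card_lt_card <| ssubset_iff_of_subset
    (monotone_filter_right _ fun z _ hz => ⟨hz.1, h z hz.1 hz.2⟩) |>.2 ⟨z, ?_, ?_⟩ <;> simp [*]

lemma colCount_pos_iff {κ : P → α} {i : α} {Q : P → Prop} :
    0 < colCount κ i Q ↔ ∃ z, κ z = i ∧ Q z := by
  simp [colCount, card_pos, Finset.Nonempty]

lemma colCount_eq_zero_iff {κ : P → α} {i : α} {Q : P → Prop} :
    colCount κ i Q = 0 ↔ ∀ z, κ z = i → ¬ Q z := by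
  simp [colCount, filter_eq_empty_iff]

lemma colCount_and_not_add (κ : P → α) (i : α) (Q R : P → Prop) :
    colCount κ i (fun z => Q z ∧ ¬ R z) + colCount κ i (fun z => Q z ∧ R z) = colCount κ i Q := by
  simp only [colCount, ← and_assoc, ← filter_filter _ R, ← filter_filter _ fun z => ¬ R z]
  rw [add_comm, card_filter_add_card_filter_not]

lemma sum_colLen [Fintype α] (κ : P → α) : ∑ i, colLen κ i = Fintype.card P := by
  simp only [colLen, colCount, and_true]
  exact (card_eq_sum_card_fiberwise fun _ _ => mem_coe.2 (mem_univ _)).symm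

variable [PartialOrder P]

/-- The number of elements of column `i` that are not above `v`. For `i = κ v` and a chain
colouring `κ`, this is the row of `v` in its column. -/
noncomputable def colLevel (κ : P → α) (i : α) (v : P) : ℕ := colCount κ i fun z => ¬ v < z

lemma colLevel_mono (κ : P → α) (i : α) : Monotone (colLevel κ i) := fun _ _ hab =>
  colCount_mono κ i fun _ _ hz hbz => hz (hab.trans_lt hbz)

lemma colLevel_le_colLen (κ : P → α) (i : α) (v : P) : colLevel κ i v ≤ colLen κ i :=
  colCount_mono κ i fun _ _ _ => trivial

lemma colLevel_self_pos (κ : P → α) (v : P) : 0 < colLevel κ (κ v) v :=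
  colCount_pos_iff.2 ⟨v, rfl, lt_irrefl v⟩

lemma colLevel_lt_of_lt {κ : P → α} {a b z : P} (hab : a ≤ b) (haz : a < z) (hbz : ¬ b < z) :
    colLevel κ (κ z) a < colLevel κ (κ z) b :=
  colCount_lt_colCount (fun _ _ hx hbx => hx (hab.trans_lt hbx)) rfl (not_not.2 haz) hbz

namespace IsChainColoring

variable {κ : P → α}

lemma lt_iff_colLevel_lt (h : IsChainColoring κ) {v u : P} :
    v < u ↔ colLevel κ (κ u) v < colLevel κ (κ u) u := by
  refine ⟨fun hvu => colLevel_lt_of_lt hvu.le hvu (lt_irrefl u), fun hlt => ?_⟩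
  by_contra hvu
  refine hlt.not_ge <| colCount_mono κ _ fun z hz huz hvz => hvu ?_
  exact hvz.trans_le ((h.not_lt_iff_le hz.symm).1 huz)

lemma eq_of_colLevel_eq (h : IsChainColoring κ) {x y : P} (hcol : κ x = κ y)
    (hlevel : colLevel κ (κ x) x = colLevel κ (κ x) y) : x = y := by
  have hyx : y ≤ x := (h.not_lt_iff_le hcol).1 fun hlt =>
    (hcol ▸ h.lt_iff_colLevel_lt.1 hlt).ne hlevel
  have hxy : x ≤ y := (h.not_lt_iff_le hcol.symm).1 fun hlt =>
    (h.lt_iff_colLevel_lt.1 hlt).ne hlevel.symm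
  exact hxy.antisymm hyx

lemma exists_colLevel_eq (h : IsChainColoring κ) {i : α} {k : ℕ} (hpos : 0 < k)
    (hk : k ≤ colLen κ i) : ∃ x, κ x = i ∧ colLevel κ i x = k := by
  have hmaps : Set.MapsTo (colLevel κ i) ({x | κ x = i} : Finset P) (Icc 1 (colLen κ i)) := by
    intro x hx
    obtain rfl : κ x = i := by simpa using hx
    exact mem_coe.2 (mem_Icc.2 ⟨colLevel_self_pos κ x, colLevel_le_colLen κ _ x⟩)
  have hinj : Set.InjOn (colLevel κ i) ({x | κ x = i} : Finset P) := by
    intro x hx y hy hxy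
    simp only [coe_filter, mem_univ, true_and, Set.mem_ofPred_eq] at hx hy
    subst hx
    exact h.eq_of_colLevel_eq hy.symm hxy
  have hcard : #(Icc 1 (colLen κ i)) ≤ #{x | κ x = i} := by simp [colLen, colCount]
  obtain ⟨x, hx, hxk⟩ := surjOn_of_injOn_of_card_le _ hmaps hinj hcard
    (mem_coe.2 (mem_Icc.2 ⟨hpos, hk⟩))
  exact ⟨x, by simpa using hx, hxk⟩

lemma exists_le_colLevel_eq (h : IsChainColoring κ) {u : P} {k : ℕ} (hpos : 0 < k)
    (hk : k ≤ colLevel κ (κ u) u) : ∃ x ≤ u, κ x = κ u ∧ colLevel κ (κ u) x = k := by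
  obtain ⟨x, hx, rfl⟩ := h.exists_colLevel_eq hpos (hk.trans (colLevel_le_colLen κ _ u))
  refine ⟨x, (h.not_lt_iff_le hx.symm).1 fun hux => hk.not_gt ?_, hx, rfl⟩
  exact hx ▸ h.lt_iff_colLevel_lt.1 hux

lemma exists_colLevel_add_one_eq (h : IsChainColoring κ) {v : P} (hv : 1 < colLevel κ (κ v) v) :
    ∃ b < v, κ b = κ v ∧ colLevel κ (κ v) b + 1 = colLevel κ (κ v) v := by
  obtain ⟨b, hbv, hcol, hlevel⟩ :=
    h.exists_le_colLevel_eq (u := v) (Nat.sub_pos_of_lt hv) (Nat.sub_le _ _)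
  refine ⟨b, hbv.lt_of_ne ?_, hcol, by omega⟩
  rintro rfl
  omega

end IsChainColoring

end ChainColoring

section Crossing

open Finset

variable {P : Type*} [PartialOrder P] {r : ℕ} {κ : P → Fin r} {u v : P} {i k : Fin r}

/-- Exchange the parts of columns `i` and `κ v` that lie above `v`. -/
noncomputable def tailSwap (κ : P → Fin r) (v : P) (i : Fin r) : P → Fin r :=
  fun x => if v < x then Equiv.swap i (κ v) (κ x) else κ x

lemma tailSwap_of_lt {x : P} (h : v < x) : tailSwap κ v i x = Equiv.swap i (κ v) (κ x) := if_pos h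

lemma tailSwap_of_not_lt {x : P} (h : ¬ v < x) : tailSwap κ v i x = κ x := if_neg h

lemma tailSwap_self : tailSwap κ v i v = κ v := tailSwap_of_not_lt (lt_irrefl v)

lemma tailSwap_tailSwap : tailSwap (tailSwap κ v i) v i = κ := by
  funext x
  by_cases hx : v < x
  · rw [tailSwap_of_lt hx, tailSwap_self, tailSwap_of_lt hx, Equiv.swap_apply_self]
  · rw [tailSwap_of_not_lt hx, tailSwap_of_not_lt hx]

variable [Fintype P]

/-- The element `v` intersects column `i`: the entry of column `i` in row
`colLevel κ (κ v) v - cyclicGap (κ v) i + 1`, which is the row of `v` if `i` is the column to its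
left, is missing or above `v`. These are the intersection points of a Gessel–Viennot argument. -/
def Crosses (κ : P → Fin r) (v : P) (i : Fin r) : Prop :=
  i ≠ κ v ∧ colLevel κ i v + cyclicGap (κ v) i ≤ colLevel κ (κ v) v

lemma Crosses.lt_of_not (hno : ¬ Crosses κ v i) (hi : i ≠ κ v) :
    colLevel κ (κ v) v < colLevel κ i v + cyclicGap (κ v) i :=
  not_le.1 fun hle => hno ⟨hi, hle⟩

-- As the predecessor `b` of `v` does not cross column `κ u`, the element `u` is not above `b`, and
-- so `(3 + 1)`-freeness puts `u` below everything above `v`.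
lemma Crosses.of_cyclicGap_eq_add (h31 : ThreePlusOneFree P) (hκ : IsChainColoring κ)
    (hv : Crosses κ v i) (hi : i ≠ κ u) (hu : κ u ≠ κ v)
    (hgap : cyclicGap (κ v) i = cyclicGap (κ v) (κ u) + cyclicGap (κ u) i)
    (hlevel : colLevel κ (κ u) u + cyclicGap (κ v) (κ u) = colLevel κ (κ v) v)
    (hno : ∀ b < v, κ b = κ v → ¬ Crosses κ b (κ u)) : Crosses κ u i := by
  have hupos := colLevel_self_pos κ u
  have hgpos := cyclicGap_pos (κ v) (κ u)
  obtain ⟨b, hbv, hbcol, hblevel⟩ := hκ.exists_colLevel_add_one_eq (v := v) (by omega)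
  have hb := Crosses.lt_of_not (hno b hbv hbcol) (hbcol ▸ hu)
  rw [hbcol] at hb
  have hbu : ¬ b < u := fun hlt => by
    have := hκ.lt_iff_colLevel_lt.1 hlt
    omega
  have hle : colLevel κ i u ≤ colLevel κ i v := colCount_mono κ i fun z hz huz hvz => huz <|
    (h31.le_of_not_lt hbv hvz hbu fun e => hu (e ▸ hbcol)).lt_of_ne fun e => hi (e ▸ hz.symm)
  have hcross := hv.2
  exact ⟨hi, by omega⟩

lemma Crosses.exists_cyclicAdj (h31 : ThreePlusOneFree P) (hκ : IsChainColoring κ)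
    (hv : Crosses κ v i) : ∃ u j, CyclicAdj j (κ u) ∧ Crosses κ u j := by
  induction hg : cyclicGap (κ v) i using Nat.strong_induction_on generalizing v i with
  | _ n ih =>
    by_cases hadj : CyclicAdj i (κ v)
    · exact ⟨v, i, hadj, hv⟩
    obtain ⟨l, hil, hlv, hgap⟩ := exists_cyclicGap_eq_add hv.1 hadj
    have hpos_vl := cyclicGap_pos (κ v) l
    have hpos_li := cyclicGap_pos l i
    by_cases hl : ∃ b, κ b = κ v ∧ Crosses κ b l
    · obtain ⟨b, hb, hbl⟩ := hl
      exact ih _ (by rw [hb]; omega) hbl rfl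
    have hno : ∀ b, κ b = κ v → ¬ Crosses κ b l := fun b hb hbl => hl ⟨b, hb, hbl⟩
    have hlt := Crosses.lt_of_not (hno v rfl) hlv
    have hlen := colLevel_le_colLen κ l v
    have hcross := hv.2
    obtain ⟨u, rfl, hu⟩ := hκ.exists_colLevel_eq (i := l)
      (k := colLevel κ (κ v) v - cyclicGap (κ v) l) (by omega) (by omega)
    have hui := hv.of_cyclicGap_eq_add h31 hκ hil hlv hgap (by omega) fun b _ => hno b
    exact ih _ (by omega) hui rfl

lemma colCount_tailSwap (κ : P → Fin r) (v : P) (i k : Fin r) (Q : P → Prop) :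
    colCount (tailSwap κ v i) k Q = colCount κ k (fun z => Q z ∧ ¬ v < z) +
      colCount κ (Equiv.swap i (κ v) k) (fun z => Q z ∧ v < z) := by
  rw [← colCount_and_not_add _ _ Q (v < ·)]
  congr 1 <;> refine colCount_congr fun z => ?_
  · exact and_congr_left fun hz => by rw [tailSwap_of_not_lt hz.2]
  · exact and_congr_left fun hz => by rw [tailSwap_of_lt hz.2, Equiv.swap_apply_eq_iff]

lemma colLevel_tailSwap_self : colLevel (tailSwap κ v i) k v = colLevel κ k v :=
  colCount_congr fun _ => and_congr_left fun hz => by rw [tailSwap_of_not_lt hz]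

lemma colLevel_eq_add (κ : P → Fin r) (k : Fin r) (u v : P) :
    colLevel κ k u = colCount κ k (fun z => ¬ u < z ∧ ¬ v < z) +
      colCount κ k (fun z => ¬ u < z ∧ v < z) :=
  (colCount_and_not_add κ k _ (v < ·)).symm

lemma colLevel_tailSwap (κ : P → Fin r) (v : P) (i k : Fin r) (u : P) :
    colLevel (tailSwap κ v i) k u = colCount κ k (fun z => ¬ u < z ∧ ¬ v < z) +
      colCount κ (Equiv.swap i (κ v) k) (fun z => ¬ u < z ∧ v < z) :=
  colCount_tailSwap κ v i k _

lemma colLevel_tailSwap_of_lt (hlt : ∀ z, κ z = i ∨ κ z = κ v → v < z → u < z) :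
    colLevel (tailSwap κ v i) k u = colLevel κ k u := by
  have hzero : ∀ m, m = i ∨ m = κ v → colCount κ m (fun z => ¬ u < z ∧ v < z) = 0 := fun m hm =>
    colCount_eq_zero_iff.2 fun z hz hz' => hz'.1 (hlt z (hz ▸ hm) hz'.2)
  rw [colLevel_tailSwap, colLevel_eq_add κ k u v]
  congr 1
  by_cases hi : k = i
  · rw [hi, Equiv.swap_apply_left, hzero _ (Or.inr rfl), hzero _ (Or.inl rfl)]
  by_cases hv : k = κ v
  · rw [hv, Equiv.swap_apply_right, hzero _ (Or.inr rfl), hzero _ (Or.inl rfl)]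
  rw [Equiv.swap_apply_of_ne_of_ne hi hv]

lemma colLevel_tailSwap_of_ne (hi : k ≠ i) (hv : k ≠ κ v) :
    colLevel (tailSwap κ v i) k u = colLevel κ k u := by
  rw [colLevel_tailSwap, Equiv.swap_apply_of_ne_of_ne hi hv, ← colLevel_eq_add]

lemma colCount_not_lt_and_not_lt_le (m : Fin r) :
    colCount κ m (fun z => ¬ u < z ∧ ¬ v < z) ≤ colLevel κ m v :=
  colCount_mono κ m fun _ _ hz => hz.2

lemma IsChainColoring.colCount_not_lt_and_not_lt_eq (hκ : IsChainColoring κ) {m : Fin r}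
    (hpos : 0 < colCount κ m fun z => ¬ u < z ∧ v < z) :
    colCount κ m (fun z => ¬ u < z ∧ ¬ v < z) = colLevel κ m v := by
  obtain ⟨y, rfl, huy, hvy⟩ := colCount_pos_iff.1 hpos
  refine colCount_congr fun z => and_congr_right fun hz => and_iff_right_of_imp fun hvz huz => ?_
  exact (hκ hz).elim (fun hzy => huy (huz.trans_le hzy)) fun hyz => hvz (hvy.trans_le hyz)

lemma crosses_tailSwap_self : Crosses (tailSwap κ v i) v k ↔ Crosses κ v k := by
  simp only [Crosses, tailSwap_self, colLevel_tailSwap_self]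

/-- The crossing at which tails are swapped: its position is minimal for a fixed linear extension
of `P`, and among the columns crossed there the nearest one is chosen. -/
structure IsFirstCrossing (κ : P → Fin r) (v : P) (i : Fin r) : Prop where
  crosses : Crosses κ v i
  le_of_crosses : ∀ ⦃u k⦄, Crosses κ u k → toLinearExtension v ≤ toLinearExtension u
  cyclicGap_le : ∀ ⦃k⦄, Crosses κ v k → cyclicGap (κ v) i ≤ cyclicGap (κ v) k

lemma Crosses.exists_isFirstCrossing (h : Crosses κ v i) : ∃ u k, IsFirstCrossing κ u k := by
  obtain ⟨u, ⟨k₀, hk₀⟩, hu⟩ := Set.exists_min_image {u | ∃ k, Crosses κ u k} toLinearExtension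
    (Set.toFinite _) ⟨v, i, h⟩
  obtain ⟨k, hk, hmin⟩ := Set.exists_min_image {k | Crosses κ u k} (cyclicGap (κ u))
    (Set.toFinite _) ⟨k₀, hk₀⟩
  exact ⟨u, k, hk, fun w l hw => hu w ⟨l, hw⟩, hmin⟩

namespace IsFirstCrossing

lemma unique (h : IsFirstCrossing κ v i) (h' : IsFirstCrossing κ u k) : v = u ∧ i = k := by
  obtain rfl : v = u := (h.le_of_crosses h'.crosses).antisymm (h'.le_of_crosses h.crosses)
  refine ⟨rfl, cyclicGap_injective (κ v) ?_⟩
  exact (h.cyclicGap_le h'.crosses).antisymm (h'.cyclicGap_le h.crosses)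

lemma not_crosses_of_lt (h : IsFirstCrossing κ v i) {b : P} (hb : b < v) (k : Fin r) :
    ¬ Crosses κ b k :=
  fun hk => hb.ne ((toLinearExtension.monotone hb.le).antisymm (h.le_of_crosses hk))

lemma exists_predecessor (h : IsFirstCrossing κ v i) (hκ : IsChainColoring κ)
    (hv : 1 < colLevel κ (κ v) v) :
    ∃ b < v, κ b = κ v ∧ colLevel κ (κ v) v ≤ colLevel κ i b + cyclicGap (κ v) i := by
  obtain ⟨b, hbv, hbcol, hblevel⟩ := hκ.exists_colLevel_add_one_eq hv
  have hb := Crosses.lt_of_not (h.not_crosses_of_lt hbv i) (hbcol ▸ h.crosses.1)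
  rw [hbcol] at hb
  exact ⟨b, hbv, hbcol, by omega⟩

lemma colLevel_add_cyclicGap (h : IsFirstCrossing κ v i) (hκ : IsChainColoring κ) :
    colLevel κ i v + cyclicGap (κ v) i = colLevel κ (κ v) v := by
  refine h.crosses.2.antisymm (not_lt.1 fun hlt => ?_)
  have hpos := cyclicGap_pos (κ v) i
  obtain ⟨b, hbv, -, hb⟩ := h.exists_predecessor hκ (by omega)
  have := colLevel_mono κ i hbv.le
  omega

lemma lt_of_not_lt_of_lt (h : IsFirstCrossing κ v i) (h31 : ThreePlusOneFree P)
    (hκ : IsChainColoring κ) {x y : P} (hxi : κ x = i) (hx : ¬ v < x) (hyv : κ y = κ v)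
    (hy : v < y) : x < y := by
  have hpos := cyclicGap_pos (κ v) i
  have hlevel := h.colLevel_add_cyclicGap hκ
  have hi : 0 < colLevel κ i v := colCount_pos_iff.2 ⟨x, hxi, hx⟩
  obtain ⟨b, hbv, hbcol, hb⟩ := h.exists_predecessor hκ (by omega)
  have hbx : ¬ b < x := fun hlt => by
    have := colLevel_lt_of_lt (κ := κ) hbv.le hlt hx
    rw [hxi] at this
    omega
  have hxb : x ≠ b := fun e => h.crosses.1 (by rw [← hxi, e, hbcol])
  have hxy : x ≠ y := fun e => h.crosses.1 (by rw [← hxi, e, hyv])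
  exact (h31.le_of_not_lt hbv hy hbx hxb).lt_of_ne hxy

lemma isChainColoring_tailSwap (h : IsFirstCrossing κ v i) (h31 : ThreePlusOneFree P)
    (hκ : IsChainColoring κ) : IsChainColoring (tailSwap κ v i) := by
  have le_of_not_lt : ∀ ⦃x y⦄, ¬ v < x → v < y → tailSwap κ v i x = tailSwap κ v i y → x ≤ y := by
    intro x y hx hy hxy
    rw [tailSwap_of_not_lt hx, tailSwap_of_lt hy] at hxy
    by_cases hyi : κ y = i
    · rw [hyi, Equiv.swap_apply_left] at hxy
      exact ((hκ.not_lt_iff_le hxy.symm).1 hx).trans hy.le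
    by_cases hyv : κ y = κ v
    · rw [hyv, Equiv.swap_apply_right] at hxy
      exact (h.lt_of_not_lt_of_lt h31 hκ hxy hx hyv hy).le
    rw [Equiv.swap_apply_of_ne_of_ne hyi hyv] at hxy
    exact (hκ hxy).resolve_right fun hyx => hx (hy.trans_le hyx)
  intro a b hab
  by_cases ha : v < a <;> by_cases hb : v < b
  · rw [tailSwap_of_lt ha, tailSwap_of_lt hb] at hab
    exact hκ ((Equiv.swap i (κ v)).injective hab)
  · exact Or.inr (le_of_not_lt hb ha hab.symm)
  · exact Or.inl (le_of_not_lt ha hb hab)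
  · rw [tailSwap_of_not_lt ha, tailSwap_of_not_lt hb] at hab
    exact hκ hab

lemma lt_of_color_eq (h : IsFirstCrossing κ v i) (h31 : ThreePlusOneFree P)
    (hκ : IsChainColoring κ) (hvu : ¬ v < u) (hu : κ u = i ∨ κ u = κ v) {z : P}
    (hz : κ z = i ∨ κ z = κ v) (hvz : v < z) : u < z := by
  have lt_of_eq : κ u = κ z → u < z := fun he =>
    ((hκ he).resolve_right fun hzu => hvu (hvz.trans_le hzu)).lt_of_ne fun e => hvu (e ▸ hvz)
  rcases hu with hu | hu
  · rcases hz with hz | hz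
    · exact lt_of_eq (hu.trans hz.symm)
    · exact h.lt_of_not_lt_of_lt h31 hκ hu hvu hz hvz
  · exact ((hκ.not_lt_iff_le hu.symm).1 hvu).trans_lt hvz

lemma not_crosses_tailSwap_left (h : IsFirstCrossing κ v i) (h31 : ThreePlusOneFree P)
    (hκ : IsChainColoring κ) (hlt : toLinearExtension u < toLinearExtension v) (hvu : ¬ v < u)
    (hui : κ u ≠ i) (huv : κ u ≠ κ v) : ¬ Crosses (tailSwap κ v i) u i := by
  have hno : ∀ k, ¬ Crosses κ u k := fun k hk => hlt.not_ge (h.le_of_crosses hk)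
  have hv := h.colLevel_add_cyclicGap hκ
  have hlow := colCount_not_lt_and_not_lt_le (κ := κ) (u := u) (v := v) (κ v)
  have hnoi := Crosses.lt_of_not (hno i) hui.symm
  have hnov := Crosses.lt_of_not (hno (κ v)) huv.symm
  rintro ⟨-, hcross⟩
  rw [tailSwap_of_not_lt hvu, colLevel_tailSwap_of_ne hui huv, colLevel_tailSwap,
    Equiv.swap_apply_left] at hcross
  rw [colLevel_eq_add κ i u v] at hnoi
  rw [colLevel_eq_add κ (κ v) u v] at hnov
  have hlowi := hκ.colCount_not_lt_and_not_lt_eq (u := u) (v := v) (m := i) (by omega)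
  rcases cyclicGap_eq_add_or huv i with hgap | hgap
  · omega
  have hpos := cyclicGap_pos (κ u) i
  obtain ⟨x, hxu, hxcol, hx⟩ := hκ.exists_le_colLevel_eq (u := u)
    (k := colLevel κ i v + cyclicGap (κ u) i) (by omega) (by omega)
  rw [← hxcol] at hgap hx huv hui
  have hxi : Crosses κ x i := h.crosses.of_cyclicGap_eq_add h31 hκ hui.symm huv hgap
    (by omega) fun b hb _ => h.not_crosses_of_lt hb _
  exact (h.le_of_crosses hxi).not_gt ((toLinearExtension.monotone hxu).trans_lt hlt)

lemma not_crosses_tailSwap_right (h : IsFirstCrossing κ v i) (hκ : IsChainColoring κ)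
    (hlt : toLinearExtension u < toLinearExtension v) (hvu : ¬ v < u)
    (hui : κ u ≠ i) (huv : κ u ≠ κ v) : ¬ Crosses (tailSwap κ v i) u (κ v) := by
  have hno : ∀ k, ¬ Crosses κ u k := fun k hk => hlt.not_ge (h.le_of_crosses hk)
  have hv := h.colLevel_add_cyclicGap hκ
  have hlow := colCount_not_lt_and_not_lt_le (κ := κ) (u := u) (v := v) i
  have hnoi := Crosses.lt_of_not (hno i) hui.symm
  have hnov := Crosses.lt_of_not (hno (κ v)) huv.symm
  have hgap := cyclicGap_triangle (κ u) (κ v) i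
  rintro ⟨-, hcross⟩
  rw [tailSwap_of_not_lt hvu, colLevel_tailSwap_of_ne hui huv, colLevel_tailSwap,
    Equiv.swap_apply_right] at hcross
  rw [colLevel_eq_add κ i u v] at hnoi
  rw [colLevel_eq_add κ (κ v) u v] at hnov
  have hlowv := hκ.colCount_not_lt_and_not_lt_eq (u := u) (v := v) (m := κ v) (by omega)
  omega

lemma le_of_crosses_tailSwap (h : IsFirstCrossing κ v i) (h31 : ThreePlusOneFree P)
    (hκ : IsChainColoring κ) (hk : Crosses (tailSwap κ v i) u k) :
    toLinearExtension v ≤ toLinearExtension u := by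
  by_contra! hlt
  have hvu : ¬ v < u := fun hvu => hlt.not_ge (toLinearExtension.monotone hvu.le)
  have not_same : ¬ ∀ m, colLevel (tailSwap κ v i) m u = colLevel κ m u := fun hsame =>
    hlt.not_ge <| h.le_of_crosses (k := k) <| by
      simpa only [Crosses, tailSwap_of_not_lt hvu, hsame] using hk
  by_cases hcol : κ u = i ∨ κ u = κ v
  · exact not_same fun m => colLevel_tailSwap_of_lt fun z =>
      h.lt_of_color_eq h31 hκ hvu hcol
  obtain ⟨hui, huv⟩ := not_or.1 hcol
  by_cases hki : k = i
  · exact h.not_crosses_tailSwap_left h31 hκ hlt hvu hui huv (hki ▸ hk)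
  by_cases hkv : k = κ v
  · exact h.not_crosses_tailSwap_right hκ hlt hvu hui huv (hkv ▸ hk)
  refine hlt.not_ge <| h.le_of_crosses (k := k) ?_
  simpa only [Crosses, tailSwap_of_not_lt hvu, colLevel_tailSwap_of_ne hki hkv,
    colLevel_tailSwap_of_ne hui huv] using hk

lemma isFirstCrossing_tailSwap (h : IsFirstCrossing κ v i) (h31 : ThreePlusOneFree P)
    (hκ : IsChainColoring κ) : IsFirstCrossing (tailSwap κ v i) v i where
  crosses := crosses_tailSwap_self.2 h.crosses
  le_of_crosses _ _ := h.le_of_crosses_tailSwap h31 hκ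
  cyclicGap_le k hk := by
    rw [tailSwap_self]
    exact h.cyclicGap_le (crosses_tailSwap_self.1 hk)

end IsFirstCrossing

end Crossing

section BalancedSequence

open Finset

variable {r : ℕ}

/-- The column lengths of an array all of whose columns avoid all others around the cylinder, that
is, the column lengths of the partitions `(r, …, r, t)` with `t < r`. -/
def IsBalancedSeq (a : Fin r → ℕ) : Prop := ∀ i j, a j < a i + cyclicGap j i

namespace IsBalancedSeq

variable {a b : Fin r → ℕ}

lemma antitone (ha : IsBalancedSeq a) : Antitone a := by
  cases r with
  | zero => exact Subsingleton.antitone a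
  | succ r =>
    refine Fin.antitone_iff_succ_le.2 fun i => Nat.le_of_lt_succ ?_
    simpa [cyclicGap] using ha i.castSucc i.succ

lemma le_add_one (ha : IsBalancedSeq a) (i j : Fin r) : a i ≤ a j + 1 := by
  let first : Fin r := ⟨0, i.pos⟩
  let last : Fin r := ⟨r - 1, Nat.sub_lt i.pos one_pos⟩
  have hgap : cyclicGap first last = 2 := cyclicGap_eq_two rfl (Nat.sub_add_cancel i.pos)
  have hends : a first < a last + 2 := hgap ▸ ha last first
  calc a i ≤ a first := ha.antitone (Nat.zero_le i.1)
    _ ≤ a last + 1 := Nat.le_of_lt_succ hends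
    _ ≤ a j + 1 := Nat.succ_le_succ (ha.antitone (Nat.le_sub_one_of_lt j.2))

lemma not_lt_and_lt (ha : IsBalancedSeq a) (hb : IsBalancedSeq b) (i j : Fin r) :
    ¬ (a i < b i ∧ b j < a j) := by
  rintro ⟨hi, hj⟩
  rcases le_total i j with hij | hji
  · have := ha.antitone hij
    have := hb.le_add_one i j
    omega
  · have := hb.antitone hji
    have := ha.le_add_one j i
    omega

lemma eq_of_sum_eq (ha : IsBalancedSeq a) (hb : IsBalancedSeq b)
    (hsum : ∑ j, a j = ∑ j, b j) : a = b := by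
  obtain h | h : a ≤ b ∨ b ≤ a := by
    by_contra h
    simp only [Pi.le_def, not_or, not_forall, not_le] at h
    obtain ⟨⟨j, hj⟩, ⟨i, hi⟩⟩ := h
    exact ha.not_lt_and_lt hb i j ⟨hi, hj⟩
  · exact funext fun j => (sum_eq_sum_iff_of_le fun i _ => h i).1 hsum j (mem_univ j)
  · exact funext fun j => ((sum_eq_sum_iff_of_le fun i _ => h i).1 hsum.symm j (mem_univ j)).symm

end IsBalancedSeq

/-- The column lengths after filling `n` cells row by row into rows of length `r`: the `k`-th cell
goes to column `k % r`. -/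
def balancedSeq (r n : ℕ) (j : Fin r) : ℕ := Nat.count (· ≡ j [MOD r]) n

lemma balancedSeq_eq (n : ℕ) (j : Fin r) :
    balancedSeq r n j = n / r + if j < n % r then 1 else 0 := by
  rw [balancedSeq, Nat.count_modEq_card _ j.pos, Nat.mod_eq_of_lt j.2]

lemma balancedSeq_succ (n : ℕ) (j : Fin r) :
    balancedSeq r (n + 1) j = balancedSeq r n j + if n % r = j then 1 else 0 := by
  simp only [balancedSeq, Nat.count_succ, Nat.ModEq, Nat.mod_eq_of_lt j.2]

lemma isBalancedSeq_balancedSeq (n : ℕ) : IsBalancedSeq (balancedSeq r n) := by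
  intro i j
  rw [balancedSeq_eq, balancedSeq_eq, cyclicGap]
  split_ifs <;> omega

lemma sum_balancedSeq (hr : 0 < r) (n : ℕ) : ∑ j, balancedSeq r n j = n := by
  induction n with
  | zero => simp [balancedSeq]
  | succ n ih =>
    have hcol : ∑ j : Fin r, (if n % r = j then 1 else 0) = 1 := by
      rw [sum_eq_single_of_mem (⟨n % r, Nat.mod_lt n hr⟩ : Fin r) (mem_univ _) (by grind)]
      simp
    simp only [balancedSeq_succ, sum_add_distrib, ih, hcol]

end BalancedSequence

section Alternant

open Finset

variable {R : Type*} [CommRing R] {r : ℕ} {z : Fin r → R} {a : Fin r → ℕ}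

/-- The alternant `(z_k ^ (a_j - j))`. At the `(r + 1)`-th roots of unity, where it is used,
`z ^ (r * j)` stands for `z ^ (-j)`. -/
def alternant (z : Fin r → R) (a : Fin r → ℕ) : Matrix (Fin r) (Fin r) R :=
  Matrix.of fun k j => z k ^ (a j + r * j)

lemma det_alternant_zero_ne_zero [IsDomain R] (hz : ∀ k, z k ^ (r + 1) = 1)
    (hinj : Function.Injective z) : (alternant z 0).det ≠ 0 := by
  have hvandermonde : alternant z 0 = Matrix.vandermonde fun k => z k ^ r := by
    ext k j
    simp [alternant, Matrix.vandermonde_apply, pow_mul]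
  rw [hvandermonde, Matrix.det_vandermonde_ne_zero_iff]
  intro k l hkl
  have hk : z k ^ r * z k = 1 := by rw [← pow_succ, hz]
  have hl : z k ^ r * z l = 1 := by rw [show z k ^ r = z l ^ r from hkl, ← pow_succ, hz]
  exact hinj (mul_left_cancel₀ (left_ne_zero_of_mul_eq_one hk) (hk.trans hl.symm))

-- The exponents on both sides, reduced modulo `r + 1`, form one complete residue system.
lemma sum_pow_balancedSeq [IsDomain R] {x : R} (hx : x ^ (r + 1) = 1) (hx1 : x ≠ 1) (n : ℕ)
    (t : Fin r) (ht : n % r = t) :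
    ∑ j, x ^ (balancedSeq r n j + r * j) = - x ^ (balancedSeq r n t + 1 + r * t) := by
  let f : Fin (r + 1) → R := fun s => x ^ (n / r + 1 + r * s)
  have hxr : x ^ r - 1 ≠ 0 := fun h => hx1 <| by
    rwa [pow_succ, sub_eq_zero.1 h, one_mul] at hx
  have hgeom : ∑ s : Fin (r + 1), (x ^ r) ^ s.1 = 0 := by
    refine (mul_eq_zero.1 ?_).resolve_left hxr
    rw [Fin.sum_univ_eq_sum_range fun s => (x ^ r) ^ s, mul_geom_sum, ← pow_mul, mul_comm, pow_mul,
      hx, one_pow, sub_self]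
  have hf : ∑ s, f s = 0 := by
    simp only [f, pow_add _ (n / r + 1), pow_mul, ← mul_sum, hgeom, mul_zero]
  have hpivot : f t.castSucc = x ^ (balancedSeq r n t + 1 + r * t) := by
    simp [f, balancedSeq_eq, ht]
  have hother : ∀ j, f (t.castSucc.succAbove j) = x ^ (balancedSeq r n j + r * j) := by
    intro j
    rw [balancedSeq_eq, ht]
    split_ifs with hj
    · rw [Fin.succAbove_of_castSucc_lt _ _ (by simpa using hj)]
      rfl
    · rw [Fin.succAbove_of_le_castSucc _ _ (by simpa using hj)]
      calc x ^ (n / r + 1 + r * (j + 1)) = x ^ (n / r + 0 + r * j) * x ^ (r + 1) := by ring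
        _ = x ^ (n / r + 0 + r * j) := by rw [hx, mul_one]
  rw [Fin.sum_univ_succAbove f t.castSucc, hpivot] at hf
  simpa only [hother] using eq_neg_of_add_eq_zero_right hf

lemma alternant_balancedSeq_succ [IsDomain R] (hz : ∀ k, z k ^ (r + 1) = 1) (hz1 : ∀ k, z k ≠ 1)
    (n : ℕ) (t : Fin r) (ht : n % r = t) :
    alternant z (balancedSeq r (n + 1)) = (alternant z (balancedSeq r n)).updateCol t
      fun k => ∑ j, (-1 : R) • alternant z (balancedSeq r n) k j := by
  ext k j
  by_cases hj : j = t
  · subst hj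
    simp only [alternant, Matrix.of_apply, Matrix.updateCol_self, ← smul_sum,
      sum_pow_balancedSeq (hz k) (hz1 k) n j ht, balancedSeq_succ, if_pos ht]
    simp
  · have hne : n % r ≠ j := fun e => hj (Fin.ext (e.symm.trans ht))
    simp [alternant, Matrix.updateCol_ne hj, balancedSeq_succ, hne]

lemma det_alternant_balancedSeq [IsDomain R] (hr : 0 < r) (hz : ∀ k, z k ^ (r + 1) = 1)
    (hz1 : ∀ k, z k ≠ 1) (n : ℕ) :
    (alternant z (balancedSeq r n)).det = (-1) ^ n * (alternant z 0).det := by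
  induction n with
  | zero =>
    have : balancedSeq r 0 = 0 := funext fun j => by simp [balancedSeq]
    rw [this, pow_zero, one_mul]
  | succ n ih =>
    rw [alternant_balancedSeq_succ hz hz1 n ⟨n % r, Nat.mod_lt n hr⟩ rfl,
      Matrix.det_updateCol_sum _ _ fun _ => -1, ih, smul_eq_mul, pow_succ, mul_left_comm, mul_assoc]

lemma IsBalancedSeq.det_alternant [IsDomain R] (ha : IsBalancedSeq a)
    (hz : ∀ k, z k ^ (r + 1) = 1) (hz1 : ∀ k, z k ≠ 1) :
    (alternant z a).det = (-1) ^ (∑ j, a j) * (alternant z 0).det := by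
  obtain rfl | hr := r.eq_zero_or_pos
  · simp
  · rw [← det_alternant_balancedSeq hr hz hz1, ← ha.eq_of_sum_eq
      (isBalancedSeq_balancedSeq _) (sum_balancedSeq hr _).symm]

end Alternant

section TailSwapping

open Finset

variable {P R : Type*} [Fintype P] [CommRing R] {r : ℕ} {κ : P → Fin r} {v : P} {i : Fin r}
variable {z : Fin r → R}

lemma prod_alternant_colLen (κ : P → Fin r) (σ : Equiv.Perm (Fin r)) :
    ∏ j, alternant z (colLen κ) (σ j) j = (∏ x, z (σ (κ x))) * ∏ j, alternant z 0 (σ j) j := by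
  simp only [alternant, Matrix.of_apply, pow_add, prod_mul_distrib, Pi.zero_apply, pow_zero,
    one_mul]
  congr 1
  simpa [colLen, colCount] using prod_fiberwise' univ κ fun j => z (σ j)

variable [PartialOrder P]

lemma IsFirstCrossing.colLevel_add_mul_modEq (h : IsFirstCrossing κ v i) (hκ : IsChainColoring κ)
    (k : Fin r) : colLevel κ k v + r * k ≡
      colLevel κ (Equiv.swap i (κ v) k) v + r * Equiv.swap i (κ v) k [MOD r + 1] := by
  have hswap : colLevel κ i v + r * i ≡ colLevel κ (κ v) v + r * κ v [MOD r + 1] := by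
    rw [← h.colLevel_add_cyclicGap hκ, add_assoc]
    exact (cyclicGap_add_mul_modEq (κ v) i).symm.add_left _
  by_cases hi : k = i
  · rwa [hi, Equiv.swap_apply_left]
  by_cases hv : k = κ v
  · rw [hv, Equiv.swap_apply_right]
    exact hswap.symm
  rw [Equiv.swap_apply_of_ne_of_ne hi hv]

lemma IsFirstCrossing.alternant_tailSwap (h : IsFirstCrossing κ v i) (hκ : IsChainColoring κ)
    (hz : ∀ k, z k ^ (r + 1) = 1) : alternant z (colLen (tailSwap κ v i)) =
      (alternant z (colLen κ)).submatrix id (Equiv.swap i (κ v)) := by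
  ext k j
  refine pow_eq_pow_of_modEq ?_ (hz k)
  have hlen : colLen κ (Equiv.swap i (κ v) j) = colLevel κ (Equiv.swap i (κ v) j) v +
      colCount κ (Equiv.swap i (κ v) j) (v < ·) := by
    simpa [colLen, colLevel] using (colCount_and_not_add κ _ (fun _ => True) (v < ·)).symm
  have hlen' : colLen (tailSwap κ v i) j = colLevel κ j v +
      colCount κ (Equiv.swap i (κ v) j) (v < ·) := by
    simpa [colLen, colLevel] using colCount_tailSwap κ v i j fun _ => True
  rw [hlen, hlen', add_right_comm, add_right_comm (colLevel κ (Equiv.swap i (κ v) j) v)]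
  exact (h.colLevel_add_mul_modEq hκ j).add_right _

lemma IsFirstCrossing.det_alternant_tailSwap (h : IsFirstCrossing κ v i) (hκ : IsChainColoring κ)
    (hz : ∀ k, z k ^ (r + 1) = 1) :
    (alternant z (colLen (tailSwap κ v i))).det = - (alternant z (colLen κ)).det := by
  rw [h.alternant_tailSwap hκ hz, Matrix.det_permute', Equiv.Perm.sign_swap h.crosses.1]
  simp

lemma IsFirstCrossing.det_alternant_eq_zero (h : IsFirstCrossing κ v i) (hκ : IsChainColoring κ)
    (hz : ∀ k, z k ^ (r + 1) = 1) (hfix : tailSwap κ v i = κ) :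
    (alternant z (colLen κ)).det = 0 := by
  refine Matrix.det_zero_of_column_eq h.crosses.1 fun k => ?_
  have := congrFun₂ (h.alternant_tailSwap hκ hz) k i
  rwa [hfix, Matrix.submatrix_apply, Equiv.swap_apply_left] at this

lemma sum_det_alternant_isFirstCrossing (h31 : ThreePlusOneFree P) (hz : ∀ k, z k ^ (r + 1) = 1)
    (v : P) (i : Fin r) :
    ∑ κ : P → Fin r with IsChainColoring κ ∧ IsFirstCrossing κ v i,
      (alternant z (colLen κ)).det = 0 := by
  refine sum_involution (fun κ _ => tailSwap κ v i) ?_ ?_ ?_ fun κ _ => tailSwap_tailSwap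
  · intro κ hκ
    obtain ⟨hκ, h⟩ := (mem_filter.1 hκ).2
    rw [h.det_alternant_tailSwap hκ hz, add_neg_cancel]
  · intro κ hκ hdet hfix
    obtain ⟨hκ, h⟩ := (mem_filter.1 hκ).2
    exact hdet (h.det_alternant_eq_zero hκ hz hfix)
  · intro κ hκ
    obtain ⟨hκ, h⟩ := (mem_filter.1 hκ).2
    exact mem_filter.2 ⟨mem_univ _, h.isChainColoring_tailSwap h31 hκ,
      h.isFirstCrossing_tailSwap h31 hκ⟩

/-- No element intersects another column. For chain colourings, this says that the columns are those
of a standard cylindric `P`-tableau with rows of length `r`. -/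
def IsNoncrossing (κ : P → Fin r) : Prop := ∀ v i, ¬ Crosses κ v i

lemma sum_det_alternant_not_isNoncrossing (h31 : ThreePlusOneFree P)
    (hz : ∀ k, z k ^ (r + 1) = 1) :
    ∑ κ : P → Fin r with IsChainColoring κ ∧ ¬ IsNoncrossing κ,
      (alternant z (colLen κ)).det = 0 := by
  have hunion : ({κ | IsChainColoring κ ∧ ¬ IsNoncrossing κ} : Finset (P → Fin r)) =
      univ.biUnion fun p : P × Fin r => {κ | IsChainColoring κ ∧ IsFirstCrossing κ p.1 p.2} := by
    ext κ
    simp only [mem_filter, mem_biUnion, mem_univ, true_and, Prod.exists, exists_and_left,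
      and_congr_right_iff, IsNoncrossing, not_forall, not_not]
    exact fun _ => ⟨fun ⟨v, i, h⟩ => h.exists_isFirstCrossing, fun ⟨v, i, h⟩ => ⟨v, i, h.crosses⟩⟩
  rw [hunion, sum_biUnion]
  · exact sum_eq_zero fun p _ => sum_det_alternant_isFirstCrossing h31 hz p.1 p.2
  · intro p _ q _ hpq
    refine disjoint_left.2 fun κ hp hq => hpq ?_
    have := (mem_filter.1 hp).2.2.unique (mem_filter.1 hq).2.2
    exact Prod.ext this.1 this.2

lemma IsNoncrossing.isBalancedSeq_colLen (h : IsNoncrossing κ) (hκ : IsChainColoring κ) :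
    IsBalancedSeq (colLen κ) := by
  intro i j
  obtain rfl | hij := eq_or_ne i j
  · exact Nat.lt_add_of_pos_right (cyclicGap_pos i i)
  obtain hj | hj := (colLen κ j).eq_zero_or_pos
  · rw [hj]
    exact Nat.add_pos_right _ (cyclicGap_pos j i)
  obtain ⟨v, rfl, hv⟩ := hκ.exists_colLevel_eq hj le_rfl
  calc colLen κ (κ v) = colLevel κ (κ v) v := hv.symm
    _ < colLevel κ i v + cyclicGap (κ v) i := Crosses.lt_of_not (h v i) hij
    _ ≤ colLen κ i + cyclicGap (κ v) i := Nat.add_le_add_right (colLevel_le_colLen κ i v) _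

lemma sum_det_alternant_isNoncrossing [IsDomain R] (hz : ∀ k, z k ^ (r + 1) = 1)
    (hz1 : ∀ k, z k ≠ 1) :
    ∑ κ : P → Fin r with IsChainColoring κ ∧ IsNoncrossing κ, (alternant z (colLen κ)).det =
      #{κ : P → Fin r | IsChainColoring κ ∧ IsNoncrossing κ} *
        ((-1) ^ Fintype.card P * (alternant z 0).det) := by
  rw [← nsmul_eq_mul, ← sum_const]
  refine sum_congr rfl fun κ hκ => ?_
  obtain ⟨hκ, h⟩ := (mem_filter.1 hκ).2
  rw [(h.isBalancedSeq_colLen hκ).det_alternant hz hz1, sum_colLen]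

lemma sum_isChainColoring_prod_perm (z : Fin r → R) (σ : Equiv.Perm (Fin r)) :
    ∑ κ : P → Fin r with IsChainColoring κ, ∏ x, z (σ (κ x)) =
      ∑ κ : P → Fin r with IsChainColoring κ, ∏ x, z (κ x) :=
  sum_equiv ((Equiv.refl P).arrowCongr σ)
    (by simp [Equiv.arrowCongr, isChainColoring_comp_iff σ.injective]) fun _ _ => rfl

lemma sum_det_alternant_colLen (z : Fin r → R) :
    ∑ κ : P → Fin r with IsChainColoring κ, (alternant z (colLen κ)).det =
      (∑ κ : P → Fin r with IsChainColoring κ, ∏ x, z (κ x)) * (alternant z 0).det := by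
  simp only [Matrix.det_apply', prod_alternant_colLen]
  rw [sum_comm, mul_sum]
  refine sum_congr rfl fun σ _ => ?_
  rw [← sum_isChainColoring_prod_perm z σ, ← mul_sum, ← sum_mul, mul_left_comm]

theorem sum_prod_isChainColoring [IsDomain R] (h31 : ThreePlusOneFree P)
    (hz : ∀ k, z k ^ (r + 1) = 1) (hz1 : ∀ k, z k ≠ 1) (hinj : Function.Injective z) :
    ∑ κ : P → Fin r with IsChainColoring κ, ∏ x, z (κ x) =
      (-1) ^ Fintype.card P * #{κ : P → Fin r | IsChainColoring κ ∧ IsNoncrossing κ} := by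
  refine mul_right_cancel₀ (det_alternant_zero_ne_zero hz hinj) ?_
  rw [← sum_det_alternant_colLen, ← sum_filter_add_sum_filter_not _ IsNoncrossing, filter_filter,
    filter_filter, sum_det_alternant_not_isNoncrossing h31 hz, add_zero,
    sum_det_alternant_isNoncrossing hz hz1, mul_left_comm, mul_assoc]

end TailSwapping

section RootsOfUnity

open Finset

lemma multiset_prod_map_pow {M : Type*} [CommMonoid M] (x : M) (s : Multiset ℕ) :
    (s.map fun k => x ^ k).prod = x ^ s.sum := by
  induction s using Multiset.induction_on with
  | empty => simp
  | cons a s ih => simp [ih, pow_add]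

variable {R : Type*} [CommRing R] {r : ℕ} {ζ : R} {P : Type*} [Fintype P] [PartialOrder P]

lemma aeval_chromPoly (z : Fin r → R) :
    aeval z (chromPoly P r) = ∑ κ : P → Fin r with IsChainColoring κ, ∏ x, z (κ x) := by
  simp only [chromPoly, map_sum, map_prod, aeval_X, isChainColoring_iff_ne]

variable [IsDomain R]

lemma prod_X_sub_C_pow_succ (hζ : IsPrimitiveRoot ζ (r + 1)) :
    ∏ j : Fin r, (Polynomial.X - Polynomial.C (ζ ^ (j.1 + 1))) =
      ∑ i ∈ range (r + 1), Polynomial.X ^ i := by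
  refine mul_right_cancel₀ (Polynomial.X_sub_C_ne_zero (1 : R)) ?_
  rw [map_one, geom_sum_mul, ← map_one Polynomial.C,
    X_pow_sub_C_eq_prod hζ r.succ_pos (one_pow (r + 1)), prod_range_succ',
    Fin.prod_univ_eq_prod_range fun i => Polynomial.X - Polynomial.C (ζ ^ (i + 1))]
  simp only [mul_one, pow_zero]

lemma aeval_esymm_pow_succ (hζ : IsPrimitiveRoot ζ (r + 1)) (k : ℕ) :
    aeval (fun j : Fin r => ζ ^ (j.1 + 1)) (esymm (Fin r) ℤ k) =
      if k ≤ r then (-1) ^ k else 0 := by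
  let s : Multiset R := univ.val.map fun j : Fin r => ζ ^ (j.1 + 1)
  have hs : s.card = r := by simp [s]
  rw [aeval_esymm_eq_multiset_esymm]
  split_ifs with hk
  · have hprod : (s.map fun x => Polynomial.X - Polynomial.C x).prod =
        ∑ i ∈ range (r + 1), Polynomial.X ^ i := by
      rw [← prod_X_sub_C_pow_succ hζ, Multiset.map_map]
      rfl
    have hcoeff := s.prod_X_sub_C_coeff (k := r - k) (by omega)
    rw [hprod, hs, Nat.sub_sub_self hk, Polynomial.finsetSum_coeff] at hcoeff
    have hone : (-1) ^ k * s.esymm k = 1 := by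
      rw [← hcoeff]
      simp [Polynomial.coeff_X_pow]
    calc s.esymm k = (-1) ^ k * ((-1) ^ k * s.esymm k) := by
          rw [← mul_assoc, ← mul_pow, neg_one_mul, neg_neg, one_pow, one_mul]
      _ = (-1) ^ k := by rw [hone, mul_one]
  · rw [Multiset.esymm, Multiset.powersetCard_eq_empty _ (hs.trans_lt (not_le.1 hk))]
    simp

lemma aeval_esymmPart_pow_succ (hζ : IsPrimitiveRoot ζ (r + 1)) {n : ℕ} (μ : n.Partition) :
    aeval (fun j : Fin r => ζ ^ (j.1 + 1)) (esymmPart (Fin r) ℤ μ) =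
      if ∀ p ∈ μ.parts, p ≤ r then (-1) ^ n else 0 := by
  rw [esymmPart, map_multiset_prod, Multiset.map_map]
  simp only [Function.comp_def, aeval_esymm_pow_succ hζ]
  split_ifs with hμ
  · rw [Multiset.map_congr rfl fun p hp => if_pos (hμ p hp), multiset_prod_map_pow, μ.parts_sum]
  · obtain ⟨p, hp, hpr⟩ : ∃ p ∈ μ.parts, ¬ p ≤ r := by simpa using hμ
    exact Multiset.prod_eq_zero (Multiset.mem_map.2 ⟨p, hp, if_neg hpr⟩)

lemma sum_prod_isChainColoring_pow_succ (hζ : IsPrimitiveRoot ζ (r + 1))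
    {coef : Nat.Partition (Fintype.card P) → ℤ}
    (hcoef : chromPoly P r = ∑ μ, C (coef μ) * esymmPart (Fin r) ℤ μ) :
    ∑ κ : P → Fin r with IsChainColoring κ, ∏ x, ζ ^ ((κ x).1 + 1) =
      (-1) ^ Fintype.card P * ∑ μ with ∀ p ∈ μ.parts, p ≤ r, (coef μ : R) := by
  rw [← aeval_chromPoly fun j : Fin r => ζ ^ (j.1 + 1), hcoef, map_sum, mul_sum, sum_filter]
  refine sum_congr rfl fun μ _ => ?_
  rw [map_mul, aeval_esymmPart_pow_succ hζ, aeval_C, eq_intCast, mul_ite, mul_zero, mul_comm]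

theorem sum_coef_eq_card_isNoncrossing (h31 : ThreePlusOneFree P)
    {coef : Nat.Partition (Fintype.card P) → ℤ}
    (hcoef : chromPoly P r = ∑ μ, C (coef μ) * esymmPart (Fin r) ℤ μ) :
    ∑ μ with ∀ p ∈ μ.parts, p ≤ r, coef μ =
      #{κ : P → Fin r | IsChainColoring κ ∧ IsNoncrossing κ} := by
  have hζ := Complex.isPrimitiveRoot_exp (r + 1) r.succ_ne_zero
  set ζ := Complex.exp (2 * Real.pi * Complex.I / (r + 1 : ℕ))
  have hz : ∀ k : Fin r, (ζ ^ (k.1 + 1)) ^ (r + 1) = 1 := fun k => by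
    rw [pow_right_comm, hζ.pow_eq_one, one_pow]
  have hz1 : ∀ k : Fin r, ζ ^ (k.1 + 1) ≠ 1 := fun k =>
    hζ.pow_ne_one_of_pos_of_lt k.1.succ_ne_zero (Nat.succ_lt_succ k.2)
  have hinj : Function.Injective fun k : Fin r => ζ ^ (k.1 + 1) := fun k l hkl =>
    Fin.ext <| Nat.succ_injective <|
      hζ.pow_inj (Nat.succ_lt_succ k.2) (Nat.succ_lt_succ l.2) hkl
  have hcount := (sum_prod_isChainColoring_pow_succ hζ hcoef).symm.trans
    (sum_prod_isChainColoring h31 hz hz1 hinj)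
  have := mul_left_cancel₀ (pow_ne_zero _ (neg_ne_zero.2 one_ne_zero)) hcount
  exact_mod_cast this

end RootsOfUnity

section CylindricTableau

open Finset

variable {P : Type*} {r : ℕ} {a : Fin r → ℕ} {T T' : ∀ c, Fin (a c) → P} {κ κ' : P → Fin r}

/-- The filling `T` of an array with column lengths `a` uses every element of `P` exactly once. -/
def IsStandard (T : ∀ c, Fin (a c) → P) : Prop :=
  Function.Bijective fun s : Σ c, Fin (a c) => T s.1 s.2

lemma isStandardTab_iff {lam mu : ℕ → ℕ}
    {T : ∀ c : Fin (lam 0), Fin (conj lam c - conj mu c) → P} :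
    IsStandardTab lam mu T ↔ IsStandard T := by
  refine (forall_congr' fun x => ?_).trans (Function.bijective_iff_existsUnique _).symm
  rw [tabCount, ← card_sigma, card_eq_one]
  simp only [ExistsUnique, Finset.ext_iff, mem_sigma, mem_univ, mem_filter, true_and,
    mem_singleton]
  refine exists_congr fun s => ⟨fun h => ⟨(h s).2 rfl, fun t => (h t).1⟩, fun h t => ⟨h.2 t, ?_⟩⟩
  rintro rfl
  exact h.1

lemma IsStandard.exists_eq (hT : IsStandard T) (x : P) : ∃ c p, T c p = x :=
  let ⟨s, hs⟩ := hT.2 x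
  ⟨s.1, s.2, hs⟩

variable [PartialOrder P]

/-- The filling `T` of an array with column lengths `a` is a cylindric `P`-tableau for the shift by
one cell. As `cyclicGap j i` is `1` if `j = i + 1` and `2` in the wrap-around case, the entries
`T i p` and `T j q` compared in the second condition are neighbours in a row. -/
def IsCyclicTableau (T : ∀ c, Fin (a c) → P) : Prop :=
  (∀ c, StrictMono (T c)) ∧
    ∀ ⦃i j⦄, CyclicAdj i j → ∀ p q, p.1 + cyclicGap j i = q.1 + 1 → ¬ T j q < T i p

variable [Fintype P]

/-- The array `T` lists the elements of every colour class of `κ` in increasing order. -/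
def IsColumnReading (T : ∀ c, Fin (a c) → P) (κ : P → Fin r) : Prop :=
  ∀ c p, κ (T c p) = c ∧ colLevel κ c (T c p) = p + 1

namespace IsColumnReading

lemma lt_iff (h : IsColumnReading T κ) (hκ : IsChainColoring κ) {x : P} {c : Fin r}
    {p : Fin (a c)} : x < T c p ↔ colLevel κ c x ≤ p := by
  rw [hκ.lt_iff_colLevel_lt, (h c p).1, (h c p).2, Nat.lt_succ_iff]

lemma strictMono (h : IsColumnReading T κ) (hκ : IsChainColoring κ) (c : Fin r) :
    StrictMono (T c) := fun p q hpq => by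
  rw [h.lt_iff hκ, (h c p).2]
  exact hpq

lemma array_unique (h : IsColumnReading T κ) (h' : IsColumnReading T' κ)
    (hκ : IsChainColoring κ) : T = T' := by
  funext c p
  refine hκ.eq_of_colLevel_eq ((h c p).1.trans (h' c p).1.symm) ?_
  rw [(h c p).1, (h c p).2, (h' c p).2]

lemma coloring_unique (h : IsColumnReading T κ) (h' : IsColumnReading T κ')
    (hT : IsStandard T) : κ = κ' := by
  funext x
  obtain ⟨c, p, rfl⟩ := hT.exists_eq x
  exact (h c p).1.trans (h' c p).1.symm

lemma crosses_iff (h : IsColumnReading T κ) (hκ : IsChainColoring κ) (ha : IsBalancedSeq a)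
    {i j : Fin r} {q : Fin (a j)} : Crosses κ (T j q) i ↔
      i ≠ j ∧ ∃ p : Fin (a i), p.1 + cyclicGap j i = q.1 + 1 ∧ T j q < T i p := by
  rw [Crosses, (h j q).1, (h j q).2]
  refine and_congr_right fun _ => ⟨fun hle => ?_, fun ⟨p, hpq, hlt⟩ => ?_⟩
  · have := ha i j
    have := q.2
    exact ⟨⟨q + 1 - cyclicGap j i, by omega⟩, Nat.sub_add_cancel (by omega),
      (h.lt_iff hκ).2 (Nat.le_sub_of_add_le hle)⟩
  · rw [← hpq]
    exact Nat.add_le_add_right ((h.lt_iff hκ).1 hlt) _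

lemma isCyclicTableau_iff (h : IsColumnReading T κ) (h31 : ThreePlusOneFree P)
    (hκ : IsChainColoring κ) (ha : IsBalancedSeq a) (hT : IsStandard T) :
    IsCyclicTableau T ↔ IsNoncrossing κ := by
  refine ⟨fun hcyl v i hv => ?_, fun hκ' => ⟨h.strictMono hκ, fun i j _ p q hpq hlt => ?_⟩⟩
  · obtain ⟨u, k, hadj, hu⟩ := hv.exists_cyclicAdj h31 hκ
    obtain ⟨j, q, rfl⟩ := hT.exists_eq u
    obtain ⟨-, p, hpq, hlt⟩ := (h.crosses_iff hκ ha).1 hu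
    exact hcyl.2 ((h j q).1 ▸ hadj) p q hpq hlt
  · obtain rfl | hij := eq_or_ne i j
    · have hgap := cyclicGap_pos i i
      have hqp : q.1 < p.1 := (h.strictMono hκ i).lt_iff_lt.1 hlt
      omega
    · exact hκ' _ i ((h.crosses_iff hκ ha).2 ⟨hij, p, hpq, hlt⟩)

end IsColumnReading

lemma IsStandard.exists_isColumnReading (hT : IsStandard T) (hmono : ∀ c, StrictMono (T c)) :
    ∃ κ, IsChainColoring κ ∧ IsColumnReading T κ := by
  choose κ pos hpos using hT.exists_eq
  have hcol : ∀ c p, κ (T c p) = c := fun c p =>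
    congrArg Sigma.fst (@hT.1 ⟨κ (T c p), pos (T c p)⟩ ⟨c, p⟩ (hpos _))
  refine ⟨κ, fun x y hxy => ?_, fun c p => ⟨hcol c p, ?_⟩⟩
  · obtain ⟨c, p, rfl⟩ := hT.exists_eq x
    obtain ⟨d, q, rfl⟩ := hT.exists_eq y
    obtain rfl : c = d := (hcol c p).symm.trans (hxy.trans (hcol d q))
    exact (le_total p q).imp (fun h => (hmono c).monotone h) fun h => (hmono c).monotone h
  · calc colLevel κ c (T c p) = #((Iic p).image (T c)) := congrArg card ?_
      _ = p + 1 := (card_image_of_injective _ (hmono c).injective).trans (Fin.card_Iic p)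
    ext z
    obtain ⟨d, q, rfl⟩ := hT.exists_eq z
    simp only [mem_filter, mem_univ, true_and, mem_image, mem_Iic, hcol]
    constructor
    · rintro ⟨rfl, hpq⟩
      exact ⟨q, not_lt.1 ((hmono d).lt_iff_lt.not.1 hpq), rfl⟩
    · rintro ⟨q', hq', heq⟩
      rw [← heq, (hmono c).lt_iff_lt, not_lt, ← hcol d q, ← heq]
      exact ⟨hcol c q', hq'⟩

lemma IsChainColoring.exists_isColumnReading (hκ : IsChainColoring κ) :
    ∃ T : ∀ c, Fin (colLen κ c) → P, IsStandard T ∧ IsColumnReading T κ := by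
  choose T hT using fun c (p : Fin (colLen κ c)) =>
    hκ.exists_colLevel_eq (Nat.succ_pos p) (Nat.succ_le_of_lt p.2)
  refine ⟨T, ⟨fun ⟨c, p⟩ ⟨d, q⟩ heq => ?_, fun x => ?_⟩, hT⟩
  · obtain rfl : c = d := (hT c p).1.symm.trans ((congrArg κ heq).trans (hT d q).1)
    have hlevel := (hT c p).2.symm.trans ((congrArg (colLevel κ c) heq).trans (hT c q).2)
    rw [Fin.ext (Nat.succ_injective hlevel)]
  · have hpos := colLevel_self_pos κ x
    have hlen := colLevel_le_colLen κ (κ x) x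
    let p : Fin (colLen κ (κ x)) := ⟨colLevel κ (κ x) x - 1, by omega⟩
    refine ⟨⟨κ x, p⟩, (hκ.eq_of_colLevel_eq (hT _ p).1.symm ?_).symm⟩
    exact (Nat.sub_add_cancel hpos).symm.trans (hT _ p).2.symm

theorem card_isCyclicTableau (h31 : ThreePlusOneFree P) (ha : IsBalancedSeq a)
    (hsum : ∑ c, a c = Fintype.card P) :
    Nat.card {T : ∀ c, Fin (a c) → P // IsCyclicTableau T ∧ IsStandard T} =
      #{κ : P → Fin r | IsChainColoring κ ∧ IsNoncrossing κ} := by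
  have hread : ∀ T : {T : ∀ c, Fin (a c) → P // IsCyclicTableau T ∧ IsStandard T},
      ∃ κ : {κ : P → Fin r // IsChainColoring κ ∧ IsNoncrossing κ}, IsColumnReading T.1 κ.1 := by
    rintro ⟨T, hcyl, hT⟩
    obtain ⟨κ, hκ, h⟩ := hT.exists_isColumnReading hcyl.1
    exact ⟨⟨κ, hκ, (h.isCyclicTableau_iff h31 hκ ha hT).1 hcyl⟩, h⟩
  choose coloring hcoloring using hread
  have hbij : Function.Bijective coloring := by
    refine ⟨fun T T' heq => Subtype.ext ?_, fun ⟨κ, hκ, hnc⟩ => ?_⟩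
    · exact (hcoloring T).array_unique (heq ▸ hcoloring T') (coloring T).2.1
    · obtain rfl : a = colLen κ :=
        ha.eq_of_sum_eq (hnc.isBalancedSeq_colLen hκ) (hsum.trans (sum_colLen κ).symm)
      obtain ⟨T, hT, h⟩ := hκ.exists_isColumnReading
      let S : {T : ∀ c, Fin (colLen κ c) → P // IsCyclicTableau T ∧ IsStandard T} :=
        ⟨T, (h.isCyclicTableau_iff h31 hκ ha hT).2 hnc, hT⟩
      exact ⟨S, Subtype.ext ((hcoloring S).coloring_unique h hT)⟩
  rw [Nat.card_eq_of_bijective coloring hbij, Nat.card_eq_fintype_card, Fintype.card_subtype]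

end CylindricTableau

section Shape

open Finset

variable {r n : ℕ}

lemma conj_zero (c : ℕ) : conj (fun _ => 0) c = 0 := by simp [conj]

/-- The partition `(r, …, r, n % r)` of `n`, as a sequence of row lengths. -/
def rowFill (r n i : ℕ) : ℕ := if i < n / r then r else if i = n / r then n % r else 0

lemma rowFill_zero (hr : 0 < r) (n : ℕ) : rowFill r n 0 = min r n := by
  rw [rowFill]
  obtain hn | hn := lt_or_ge n r
  · rw [Nat.div_eq_of_lt hn, Nat.mod_eq_of_lt hn, min_eq_right hn.le]
    simp
  · rw [if_pos (Nat.div_pos hn hr), min_eq_left hn]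

lemma conj_rowFill {c : ℕ} (hc : c < r) (n : ℕ) :
    conj (rowFill r n) c = n / r + if c < n % r then 1 else 0 := by
  have hrows : {i | c < rowFill r n i} = Set.Iio (n / r + if c < n % r then 1 else 0) := by
    ext i
    simp only [Set.mem_ofPred_eq, Set.mem_Iio, rowFill]
    split_ifs <;> omega
  rw [conj, hrows, ← Finset.coe_Iio, Set.ncard_coe_finset, Nat.card_Iio]

lemma conj_rowFill_eq_balancedSeq (hr : 0 < r) (n : ℕ) (c : Fin (rowFill r n 0)) :
    conj (rowFill r n) c = balancedSeq (rowFill r n 0) n c := by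
  have hc : c.1 < min r n := c.2.trans_eq (rowFill_zero hr n)
  rw [conj_rowFill (lt_min_iff.1 hc).1, balancedSeq_eq]
  simp only [rowFill_zero hr]
  obtain hn | hn := lt_or_ge n r
  · rw [min_eq_right hn.le] at hc ⊢
    rw [Nat.div_eq_of_lt hn, Nat.mod_eq_of_lt hn, Nat.div_self (Nat.zero_lt_of_lt hc),
      Nat.mod_self, if_pos hc]
    simp
  · rw [min_eq_left hn]

lemma isBalancedSeq_conj_rowFill (hr : 0 < r) (n : ℕ) :
    IsBalancedSeq fun c : Fin (rowFill r n 0) => conj (rowFill r n) c := by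
  simpa only [conj_rowFill_eq_balancedSeq hr] using isBalancedSeq_balancedSeq n

lemma sum_conj_rowFill (hr : 0 < r) (n : ℕ) :
    ∑ c : Fin (rowFill r n 0), conj (rowFill r n) c = n := by
  simp only [conj_rowFill_eq_balancedSeq hr]
  obtain rfl | hn := n.eq_zero_or_pos
  · simp [balancedSeq]
  · exact sum_balancedSeq (by rw [rowFill_zero hr]; exact lt_min hr hn) n

variable {P : Type*} [PartialOrder P] {lam : ℕ → ℕ}

lemma isCylTab_iff (ha : IsBalancedSeq fun c : Fin (lam 0) => conj lam c)
    {T : ∀ c : Fin (lam 0), Fin (conj lam c - conj (fun _ => 0) c) → P} :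
    IsCylTab lam (fun _ => 0) 1 T ↔ IsCyclicTableau T := by
  constructor
  · rintro ⟨-, -, -, hmono, hrow, hwrap⟩
    refine ⟨fun c p q => hmono c p q, ?_⟩
    rintro ⟨i, hi⟩ ⟨j, hj⟩ hadj p q hpq
    obtain rfl | ⟨rfl, hlast⟩ : i + 1 = j ∨ j = 0 ∧ i + 1 = lam 0 := hadj
    · rw [cyclicGap_eq_one rfl] at hpq
      exact hrow ⟨i, hi⟩ hj p q (by simp only [conj_zero]; omega)
    · rw [cyclicGap_eq_two rfl hlast] at hpq
      obtain rfl : i = lam 0 - 1 := by omega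
      exact hwrap hj p q (by simp only [conj_zero]; omega)
  · rintro ⟨hmono, hrow⟩
    simp only [IsCylTab, conj_zero, zero_add, le_refl, and_true, zero_le]
    refine ⟨fun c hc => ?_, fun _ _ => trivial, fun h0 => ?_, fun c p q => @hmono c p q,
      fun c hc p q hpq => ?_, fun h0 p q hpq => ?_⟩
    · have hle : (⟨c, by omega⟩ : Fin (lam 0)) ≤ ⟨c + 1, hc⟩ := Nat.le_succ c
      exact ha.antitone hle
    · exact ha.le_add_one ⟨0, h0⟩ ⟨lam 0 - 1, by omega⟩
    · exact @hrow c ⟨c + 1, hc⟩ (Or.inl rfl) p q (by rw [cyclicGap_eq_one rfl, hpq])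
    · have hlast : lam 0 - 1 + 1 = lam 0 := by omega
      refine @hrow ⟨lam 0 - 1, by omega⟩ ⟨0, h0⟩ (Or.inr ⟨rfl, hlast⟩) p q ?_
      rw [cyclicGap_eq_two rfl hlast, ← hpq]

variable [Fintype P]

theorem card_isCylTab (h31 : ThreePlusOneFree P)
    (ha : IsBalancedSeq fun c : Fin (lam 0) => conj lam c)
    (hsum : ∑ c : Fin (lam 0), conj lam c = Fintype.card P) :
    Nat.card {T : ∀ c : Fin (lam 0), Fin (conj lam c - conj (fun _ => 0) c) → P //
        IsCylTab lam (fun _ => 0) 1 T ∧ IsStandardTab lam (fun _ => 0) T} =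
      #{κ : P → Fin (lam 0) | IsChainColoring κ ∧ IsNoncrossing κ} := by
  rw [← card_isCyclicTableau (a := fun c => conj lam c - conj (fun _ => 0) c) h31]
  · exact Nat.card_congr
      (Equiv.subtypeEquivRight fun T => and_congr (isCylTab_iff ha) isStandardTab_iff)
  · simpa only [conj_zero, Nat.sub_zero] using ha
  · simpa only [conj_zero, Nat.sub_zero] using hsum

lemma forall_mem_parts_le_rowFill_zero_iff (hr : 0 < r) (μ : n.Partition) :
    (∀ p ∈ μ.parts, p ≤ rowFill r n 0) ↔ ∀ p ∈ μ.parts, p ≤ r := by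
  rw [rowFill_zero hr]
  exact forall₂_congr fun p hp => by simp only [le_min_iff, μ.le_of_mem_parts hp, and_true]

end Shape

/-- for a `(3+1)`-free finite poset `P` with `|P| = n` and `r > 0`,
the partial sum `Σ_{λ ⊢ n, λ₁ ≤ r} c^P_λ` of the `e`-expansion coefficients of
`X_{inc(P)}` equals the number of standard cylindric `P`-tableaux of shape
`(r^c t)/∅/1`, where `(r^c t)` is the partition of `n` with the maximal number of
rows of length `r` (`c = n / r`, `t = n % r`); in particular it is nonnegative. -/
theorem stmt_13 (P : Type*) [Fintype P] [PartialOrder P] (h31 : ThreePlusOneFree P)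
    (r : ℕ) (hr : 0 < r)
    (coef : Nat.Partition (Fintype.card P) → ℤ)
    (hcoef : ∀ N, chromPoly P N
        = ∑ μ : Nat.Partition (Fintype.card P), C (coef μ) * esymmPart (Fin N) ℤ μ) :
    (∑ μ ∈ Finset.univ.filter
        (fun μ : Nat.Partition (Fintype.card P) => ∀ p ∈ μ.parts, p ≤ r), coef μ)
      = (Nat.card {T : ∀ col : Fin ((fun i => if i < Fintype.card P / r then r
              else if i = Fintype.card P / r then Fintype.card P % r else 0) 0),
            Fin (conj (fun i => if i < Fintype.card P / r then r
                else if i = Fintype.card P / r then Fintype.card P % r else 0) col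
              - conj (fun _ => 0) col) → P //
          IsCylTab (fun i => if i < Fintype.card P / r then r
              else if i = Fintype.card P / r then Fintype.card P % r else 0) (fun _ => 0) 1 T ∧
          IsStandardTab (fun i => if i < Fintype.card P / r then r
              else if i = Fintype.card P / r then Fintype.card P % r else 0) (fun _ => 0) T} : ℤ) := by
  have hpart (μ : Nat.Partition (Fintype.card P)) := forall_mem_parts_le_rowFill_zero_iff hr μ
  simp only [← hpart]
  rw [sum_coef_eq_card_isNoncrossing h31 (hcoef _)]
  exact congrArg Nat.cast (card_isCylTab (lam := rowFill r (Fintype.card P)) h31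
    (isBalancedSeq_conj_rowFill hr _) (sum_conj_rowFill hr _)).symm
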